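/- Let D = (D_n)_{n=1}^∞ be a sequence of nonempty open subsets of [0,1] forming a base for the topology of [0,1], let t ∈ [0,1], set J(t) = {n : t ∈ D_n} and w(t) = Σ_{n ∈ J(t)} 2^{-n}. If the closure of D_n does not contain t for every n ∉ J(t), then the norm of the evaluation functional δ_t : x ↦ x(t) on X_D = (C[0,1], ‖·‖_D) equals 1/√(w(t)). -/

import Mathlib

open Set Filter Topology
open scoped Classical

/-- The `n`-th seminorm: `‖x‖ₙ = sup_{d ∈ Dₙ} |x d|`. -/
noncomputable def seminormD (D : ℕ → Set (Icc (0:ℝ) 1)) (n : ℕ)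
    (x : C(Icc (0:ℝ) 1, ℝ)) : ℝ :=
  ⨆ d : D n, |x d|

/-- The norm `‖x‖_D = (Σₙ 2⁻ⁿ ‖x‖ₙ²)^{1/2}` (indexing the sequence from `0`,
with weight `2^{-(n+1)}`). -/
noncomputable def normD (D : ℕ → Set (Icc (0:ℝ) 1)) (x : C(Icc (0:ℝ) 1, ℝ)) : ℝ :=
  Real.sqrt (∑' n : ℕ, (1 / 2 : ℝ) ^ (n + 1) * (seminormD D n x) ^ 2)

lemma aux_bdd (D : ℕ → Set (Icc (0:ℝ) 1)) (n : ℕ) (x : C(Icc (0:ℝ) 1, ℝ)) :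
    BddAbove (Set.range (fun d : D n => |x d|)) := by
  refine ⟨‖x‖, ?_⟩
  rintro _ ⟨d, rfl⟩
  exact x.norm_coe_le_norm d

lemma aux_le_norm (D : ℕ → Set (Icc (0:ℝ) 1)) (n : ℕ) (x : C(Icc (0:ℝ) 1, ℝ)) :
    seminormD D n x ≤ ‖x‖ :=
  Real.iSup_le (fun d => x.norm_coe_le_norm d) (norm_nonneg x)

lemma aux_nonneg (D : ℕ → Set (Icc (0:ℝ) 1)) (n : ℕ) (x : C(Icc (0:ℝ) 1, ℝ)) :
    0 ≤ seminormD D n x := Real.iSup_nonneg (fun _ => abs_nonneg _)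

lemma aux_ge (D : ℕ → Set (Icc (0:ℝ) 1)) (n : ℕ) (x : C(Icc (0:ℝ) 1, ℝ))
    (t : Icc (0:ℝ) 1) (ht : t ∈ D n) : |x t| ≤ seminormD D n x :=
  le_ciSup (aux_bdd D n x) (⟨t, ht⟩ : D n)

lemma aux_geom : Summable (fun n : ℕ => (1 / 2 : ℝ) ^ (n + 1)) :=
  (summable_nat_add_iff 1).2 summable_geometric_two

lemma aux_summable (D : ℕ → Set (Icc (0:ℝ) 1)) (x : C(Icc (0:ℝ) 1, ℝ)) :
    Summable (fun n : ℕ => (1 / 2 : ℝ) ^ (n + 1) * (seminormD D n x) ^ 2) := by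
  refine Summable.of_nonneg_of_le (fun n => by positivity) (fun n => ?_)
    (aux_geom.mul_right (‖x‖ ^ 2))
  have := aux_le_norm D n x
  have := aux_nonneg D n x
  gcongr

lemma aux_smul (D : ℕ → Set (Icc (0:ℝ) 1)) (c : ℝ) (x : C(Icc (0:ℝ) 1, ℝ)) :
    normD D (c • x) = |c| * normD D x := by
  have h : ∀ n, seminormD D n (c • x) = |c| * seminormD D n x := by
    intro n
    simp only [seminormD, ContinuousMap.smul_apply, smul_eq_mul, abs_mul]
    rw [Real.mul_iSup_of_nonneg (abs_nonneg c)]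
  have h2 : ∀ n : ℕ, (1 / 2 : ℝ) ^ (n + 1) * (seminormD D n (c • x)) ^ 2
      = c ^ 2 * ((1 / 2 : ℝ) ^ (n + 1) * (seminormD D n x) ^ 2) := by
    intro n
    rw [h, mul_pow, sq_abs]
    ring
  unfold normD
  simp_rw [h2]
  rw [tsum_mul_left, Real.sqrt_mul (sq_nonneg c), Real.sqrt_sq_eq_abs]

lemma aux_wsum (D : ℕ → Set (Icc (0:ℝ) 1)) (t : Icc (0:ℝ) 1) :
    Summable (fun n : ℕ => if t ∈ D n then (1 / 2 : ℝ) ^ (n + 1) else 0) := by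
  refine Summable.of_nonneg_of_le (fun n => ?_) (fun n => ?_) aux_geom
  · split_ifs <;> positivity
  · split_ifs
    · exact le_rfl
    · positivity

/-- The key inequality `|x t| √w ≤ ‖x‖_D`. -/
lemma aux_key (D : ℕ → Set (Icc (0:ℝ) 1)) (t : Icc (0:ℝ) 1) (x : C(Icc (0:ℝ) 1, ℝ)) :
    |x t| * Real.sqrt (∑' n : ℕ, if t ∈ D n then (1 / 2 : ℝ) ^ (n + 1) else 0) ≤ normD D x := by
  rw [← Real.sqrt_sq_eq_abs, ← Real.sqrt_mul (sq_nonneg _), ← tsum_mul_left]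
  refine Real.sqrt_le_sqrt (Summable.tsum_le_tsum (fun n => ?_) ((aux_wsum D t).mul_left _)
    (aux_summable D x))
  split_ifs with h
  · rw [mul_comm, ← sq_abs]
    have := aux_ge D n x t h
    gcongr
  · rw [mul_zero]
    positivity

lemma aux_fun (D : ℕ → Set (Icc (0:ℝ) 1)) (t : Icc (0:ℝ) 1)
    (hclos : ∀ n : ℕ, t ∉ D n → t ∉ closure (D n)) (N : ℕ) :
    ∃ x : C(Icc (0:ℝ) 1, ℝ), x t = 1 ∧ (∀ s, |x s| ≤ 1) ∧
      ∀ n < N, t ∉ D n → ∀ s ∈ D n, x s = 0 := by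
  have hC : IsClosed (⋃ n ∈ {n : ℕ | n < N ∧ t ∉ D n}, closure (D n)) :=
    ((Set.finite_lt_nat N).subset (fun n hn => hn.1)).isClosed_biUnion
      (fun n _ => isClosed_closure)
  obtain ⟨f, h0, h1, h2⟩ := exists_continuous_zero_one_of_isClosed hC
    (isClosed_singleton (x := t)) (by
      rw [Set.disjoint_singleton_right]
      simp only [Set.mem_iUnion, not_exists]
      exact fun n hn => hclos n hn.2)
  refine ⟨f, h1 rfl, fun s => ?_, fun n hn ht s hs => ?_⟩
  · rw [abs_of_nonneg (h2 s).1]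
    exact (h2 s).2
  · exact h0 (Set.mem_biUnion (show n ∈ {n : ℕ | n < N ∧ t ∉ D n} from ⟨hn, ht⟩)
      (subset_closure hs))

/-- Let `t ∈ [0,1]`, `J(t) = {n : t ∈ Dₙ}` and `w(t) = Σ_{n ∈ J(t)} 2⁻ⁿ` (with the same
weights `2^{-(n+1)}` as in `normD`). If `t` is not in the closure of `Dₙ` for every
`n ∉ J(t)`, then the dual norm of the evaluation functional `δ_t` on
`X_D = (C[0,1], ‖·‖_D)`, i.e. `sup {|x(t)| : ‖x‖_D ≤ 1}`, equals `1/√(w(t))`. -/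

theorem dual_norm_eval (D : ℕ → Set (Icc (0:ℝ) 1))
    (hDopen : ∀ n, IsOpen (D n)) (hDne : ∀ n, (D n).Nonempty)
    (hbasis : TopologicalSpace.IsTopologicalBasis (Set.range D))
    (t : Icc (0:ℝ) 1)
    (hclos : ∀ n : ℕ, t ∉ D n → t ∉ closure (D n)) :
    sSup {r : ℝ | ∃ x : C(Icc (0:ℝ) 1, ℝ), normD D x ≤ 1 ∧ r = |x t|} =
      1 / Real.sqrt (∑' n : ℕ, if t ∈ D n then (1 / 2 : ℝ) ^ (n + 1) else 0) := by
  set w := ∑' n : ℕ, if t ∈ D n then (1 / 2 : ℝ) ^ (n + 1) else 0 with hw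
  have hwpos : 0 < w := by
    obtain ⟨_, ⟨n, rfl⟩, hn, -⟩ := hbasis.exists_subset_of_mem_open (Set.mem_univ t) isOpen_univ
    refine (aux_wsum D t).tsum_pos (fun n => ?_) n ?_
    · split_ifs <;> positivity
    · rw [if_pos hn]
      positivity
  have hs : 0 < Real.sqrt w := Real.sqrt_pos.2 hwpos
  have hub : ∀ r ∈ {r : ℝ | ∃ x : C(Icc (0:ℝ) 1, ℝ), normD D x ≤ 1 ∧ r = |x t|},
      r ≤ 1 / Real.sqrt w := by
    rintro _ ⟨x, hx, rfl⟩
    rw [le_div_iff₀ hs]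
    exact (aux_key D t x).trans hx
  apply le_antisymm
  · refine csSup_le ⟨0, 0, ?_, by simp⟩ hub
    simp [normD, seminormD]
  choose x hx1 hxb hx0 using aux_fun D t hclos
  have hle : ∀ N n, seminormD D n (x N) ≤ 1 := fun N n =>
    Real.iSup_le (fun d => hxb N d) zero_le_one
  have hlim : Tendsto (fun N => ∑' n : ℕ, (1 / 2 : ℝ) ^ (n + 1) * (seminormD D n (x N)) ^ 2)
      atTop (𝓝 w) := by
    refine tendsto_tsum_of_dominated_convergence aux_geom (fun n => ?_)
      (Eventually.of_forall fun N n => ?_)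
    · refine tendsto_const_nhds.congr' ?_
      filter_upwards [eventually_gt_atTop n] with N hN
      split_ifs with h
      · have h1 : seminormD D n (x N) = 1 := by
          refine le_antisymm (hle N n) ?_
          have := aux_ge D n (x N) t h
          rwa [hx1, abs_one] at this
        rw [h1]
        simp
      · have h1 : seminormD D n (x N) = 0 := by
          refine le_antisymm (Real.iSup_le (fun d => ?_) le_rfl) (aux_nonneg _ _ _)
          rw [hx0 N n hN h d d.2, abs_zero]
        rw [h1]
        simp
    · rw [Real.norm_of_nonneg (by positivity)]
      have h1 := hle N n
      have h2 := aux_nonneg D n (x N)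
      exact mul_le_of_le_one_right (by positivity) (pow_le_one₀ h2 h1)
  have hlim2 : Tendsto (fun N => 1 / normD D (x N)) atTop (𝓝 (1 / Real.sqrt w)) :=
    tendsto_const_nhds.div ((Real.continuous_sqrt.tendsto w).comp hlim) hs.ne'
  refine le_of_tendsto hlim2 (Eventually.of_forall fun N => ?_)
  have hpos : 0 < normD D (x N) := by
    have := aux_key D t (x N)
    rw [hx1, abs_one, one_mul] at this
    exact hs.trans_le this
  refine le_csSup ⟨_, hub⟩ ⟨(1 / normD D (x N)) • x N, ?_, ?_⟩
  · rw [aux_smul, abs_of_pos (by positivity), one_div_mul_cancel hpos.ne']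
  · rw [ContinuousMap.smul_apply, hx1, smul_eq_mul, mul_one, abs_of_pos (by positivity)]
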